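/- Let f ∈ ℂ[x₁,…,x_{n+1}] be a strongly tame polynomial of weighted degree d with homogenization F, let μ := dim_ℂ V_g, and let b ∈ ℂ be a regular value of f. Then dim_ℂ ℂ[x₀,x]/⟨∂F_b/∂x₀, ∂F_b/∂x₁, …, ∂F_b/∂x_{n+1}⟩ = (d − 1)·μ, where F_b := F − b·x₀^d. Consequently, any function β ↦ d_β such that the monomials x₀^{β₀}x^β, β ∈ I, 0 ≤ β₀ ≤ d_β − 1, form a ℂ-basis of this quotient satisfies Σ_{β∈I} d_β = (d − 1)·μ. -/

import Mathlib

/-! Write `J_f` for the ideal of the partial derivatives of `f`, and `S` for the quotient of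
`ℂ[x₀, x]` by their homogenizations. The map `x₀ ↦ T`, `xⱼ ↦ T ^ αⱼ * xⱼ` identifies `S[1/x₀]` with
`(ℂ[x] ⧸ J_f)[T, T⁻¹]`. Tameness says that `x₀` and the homogenized partials have no common zero
but the origin, so they form a regular sequence; thus `x₀` is regular on `S`, and `S` embeds into
`(ℂ[x] ⧸ J_f)[T]` with cokernel of finite dimension. A regular element has quotients of the same
dimension on both sides of such an embedding. For `x₀` this gives `dim V_g = dim (ℂ[x] ⧸ J_f)`.
By Euler's identity, `∂F_b/∂x₀` goes to `d * T ^ (d - 1) * (f - b)`, and `f - b` is a unit modulo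
`J_f` because `b` is a regular value, so the Jacobian quotient has dimension
`(d - 1) * dim (ℂ[x] ⧸ J_f)`. -/

open MvPolynomial

noncomputable section

/-- The homogenization `F = Σ_{i=0}^d fᵢ·x₀^{d-i}` of `f`. -/
def homogenization (n d : ℕ) (α : Fin (n + 1) → ℕ)
    (f : MvPolynomial (Fin (n + 1)) ℂ) : MvPolynomial (Fin (n + 2)) ℂ :=
  ∑ i ∈ Finset.range (d + 1),
    rename Fin.succ (weightedHomogeneousComponent α i f) * X 0 ^ (d - i)

/-- The ideal generated by all partial derivatives of `F_b = F - b·x₀^d`. -/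
def fullJacobianIdeal (n d : ℕ) (α : Fin (n + 1) → ℕ)
    (f : MvPolynomial (Fin (n + 1)) ℂ) (b : ℂ) : Ideal (MvPolynomial (Fin (n + 2)) ℂ) :=
  Ideal.span (Set.range fun i : Fin (n + 2) =>
    pderiv i (homogenization n d α f - C b * X 0 ^ d))

universe u

section RelationsAndExt

open CategoryTheory Abelian Pointwise IsSMulRegular

variable {R : Type u} [CommRing R]

lemma exists_forall_notMem_of_finite {K E : Type*} [Field K] [Infinite K] [AddCommGroup E]
    [Module K E] {S : Set (Submodule K E)} (hS : S.Finite) (htop : ⊤ ∉ S) :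
    ∃ v, ∀ W ∈ S, v ∉ W := by
  have hne := Subspace.biUnion_ne_univ_of_top_notMem (s := hS.toFinset)
    (mt hS.mem_toFinset.mp htop)
  simpa [Set.ne_univ_iff_exists_notMem] using hne

lemma exists_isSMulRegular_sum_smul {K ι M : Type*} [Field K] [Infinite K] [Algebra K R]
    [IsNoetherianRing R] [AddCommGroup M] [Module R M] [Module.Finite R M] [Fintype ι] {h : ι → R}
    {x : R} (hx : IsSMulRegular M x) (hxh : x ∈ Module.annihilator R M ⊔ Ideal.span (Set.range h))
    {S : Set (Submodule K (ι → K))} (hS : S.Finite) (htop : ⊤ ∉ S) :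
    ∃ c : ι → K, (∀ W ∈ S, c ∉ W) ∧ IsSMulRegular M (∑ i, c i • h i) := by
  classical
  have hass : (⋃ P ∈ associatedPrimes R M, (P : Set R)) = {r | IsSMulRegular M r}ᶜ :=
    biUnion_associatedPrimes_eq_compl_regular R M
  let pull (P : Ideal R) : Submodule K (ι → K) :=
    (P.restrictScalars K).comap (Fintype.linearCombination K h)
  have hpull : ⊤ ∉ pull '' associatedPrimes R M := by
    rintro ⟨P, hP, hPtop⟩
    have hhP : Ideal.span (Set.range h) ≤ P := by
      rw [Ideal.span_le, Set.range_subset_iff]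
      intro i
      have hi : Pi.single i 1 ∈ pull P := hPtop ▸ Submodule.mem_top
      simpa [pull, Fintype.linearCombination_apply_single] using hi
    have hann : Module.annihilator R M ≤ P := by
      rw [← Submodule.annihilator_top]
      exact IsAssociatedPrime.annihilator_le hP
    have hxP : x ∈ ⋃ P ∈ associatedPrimes R M, (P : Set R) :=
      Set.mem_biUnion hP (sup_le hann hhP hxh)
    exact (hass ▸ hxP) hx
  obtain ⟨c, hc⟩ := exists_forall_notMem_of_finite
    (hS.union ((associatedPrimes.finite R M).image pull)) (not_or.mpr ⟨htop, hpull⟩)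
  refine ⟨c, fun W hW => hc W (.inl hW), ?_⟩
  by_contra hreg
  have hmem : ∑ i, c i • h i ∈ ⋃ P ∈ associatedPrimes R M, (P : Set R) := hass ▸ hreg
  obtain ⟨P, hP, hcP⟩ := Set.mem_iUnion₂.mp hmem
  exact hc (pull P) (.inr ⟨P, hP, rfl⟩) (by simpa [pull, Fintype.linearCombination_apply] using hcP)

lemma subsingleton_ext_quotSMulTop {N M : ModuleCat.{u} R} {a : R} (ha : IsSMulRegular M a) {i : ℕ}
    (h₀ : Subsingleton (Ext N M i)) (h₁ : Subsingleton (Ext N M (i + 1))) :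
    Subsingleton (Ext N (ModuleCat.of R (QuotSMulTop a M)) i) := by
  have zero₀ := AddCommGrpCat.isZero_of_iff_subsingleton.mpr h₀
  have zero₁ := AddCommGrpCat.isZero_of_iff_subsingleton.mpr h₁
  exact AddCommGrpCat.subsingleton_of_isZero <| ShortComplex.Exact.isZero_of_both_zeros
    ((Ext.covariant_sequence_exact₃' _ ha.smulShortComplex_shortExact) i (i + 1) rfl)
    (zero₀.eq_zero_of_src _) (zero₁.eq_zero_of_tgt _)

lemma smul_sub_smul_mem_of_sum_smul_eq_zero {M : Type*} [AddCommGroup M] [Module R M] {m : ℕ}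
    {h c : Fin (m + 1) → R}
    (hquot : ∀ q : Fin m → QuotSMulTop (∑ i, c i * h i) M, ∑ i, h i.succ • q i = 0 →
      ∀ i, q i ∈ Ideal.span (Set.range fun j : Fin m => h j.succ) • (⊤ : Submodule R _))
    {q : Fin (m + 1) → M} (hq : ∑ i, h i • q i = 0) (i : Fin m) :
    c 0 • q i.succ - c i.succ • q 0 ∈ Ideal.span (Set.range h) • (⊤ : Submodule R M) := by
  set a := ∑ i, c i * h i with ha
  have hcross : ∑ j : Fin m, h j.succ • (c 0 • q j.succ - c j.succ • q 0) = -(a • q 0) := by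
    have hcq := congrArg (c 0 • ·) hq
    simp only [Fin.sum_univ_succ, smul_add, smul_zero, Finset.smul_sum] at hcq
    simp only [ha, Fin.sum_univ_succ, add_smul, Finset.sum_smul, smul_sub, Finset.sum_sub_distrib,
      smul_smul, mul_comm (h _)] at hcq ⊢
    rw [neg_add, ← sub_eq_add_neg, sub_left_inj, eq_neg_iff_add_eq_zero, add_comm, hcq]
  have hzero : ∑ j : Fin m, h j.succ •
      (a • (⊤ : Submodule R M)).mkQ (c 0 • q j.succ - c j.succ • q 0) = 0 := by
    simp_rw [← map_smul]
    rw [← map_sum, hcross, map_neg, neg_eq_zero, Submodule.mkQ_apply, Submodule.Quotient.mk_eq_zero]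
    exact Submodule.smul_mem_pointwise_smul _ _ _ Submodule.mem_top
  have hmem := hquot _ hzero i
  rw [← Submodule.mem_comap,
    Submodule.comap_smul_top_of_surjective _ _ (Submodule.mkQ_surjective _), Submodule.ker_mkQ,
    ← Submodule.ideal_span_singleton_smul, ← Submodule.sup_smul] at hmem
  refine Submodule.smul_mono_left (sup_le (Ideal.span_mono ?_) ?_) hmem
  · exact Set.range_comp_subset_range Fin.succ h
  · rw [Ideal.span_singleton_le_iff_mem]
    exact sum_mem fun j _ => Ideal.mul_mem_left _ _ (Ideal.subset_span ⟨j, rfl⟩)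

lemma sup_span_le_annihilator_quotSMulTop_sup {M : Type*} [AddCommGroup M] [Module R M] {m : ℕ}
    (h : Fin (m + 1) → R) {c : Fin (m + 1) → R} (hc : IsUnit (c 0)) :
    Module.annihilator R M ⊔ Ideal.span (Set.range h) ≤
      Module.annihilator R (QuotSMulTop (∑ i, c i * h i) M) ⊔
        Ideal.span (Set.range fun j : Fin m => h j.succ) := by
  set a := ∑ i, c i * h i with ha
  have htail (j : Fin m) : h j.succ ∈ Ideal.span (Set.range fun j : Fin m => h j.succ) :=
    Ideal.subset_span ⟨j, rfl⟩
  have hann : a ∈ Module.annihilator R (QuotSMulTop a M) := by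
    refine Module.mem_annihilator.mpr fun y => ?_
    obtain ⟨y, rfl⟩ := Submodule.mkQ_surjective _ y
    rw [← map_smul, Submodule.mkQ_apply, Submodule.Quotient.mk_eq_zero]
    exact Submodule.smul_mem_pointwise_smul _ _ _ trivial
  refine sup_le (le_sup_of_le_left ?_) ?_
  · exact LinearMap.annihilator_le_of_surjective _ (Submodule.mkQ_surjective _)
  · rw [Ideal.span_le, Set.range_subset_iff, Fin.forall_fin_succ]
    refine ⟨?_, fun j => Ideal.mem_sup_right (htail j)⟩
    have hhead : c 0 * h 0 = a - ∑ j : Fin m, c j.succ * h j.succ := by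
      rw [ha, Fin.sum_univ_succ, add_sub_cancel_right]
    rw [SetLike.mem_coe, ← Ideal.unit_mul_mem_iff_mem _ hc, hhead]
    exact sub_mem (Ideal.mem_sup_left hann)
      (Ideal.mem_sup_right (sum_mem fun j _ => Ideal.mul_mem_left _ _ (htail j)))

lemma exists_isSMulRegular_of_subsingleton_ext_zero [IsNoetherianRing R] {N M : ModuleCat.{u} R}
    [Module.Finite R N] [Module.Finite R M] (hext : Subsingleton (Ext N M 0)) :
    ∃ x ∈ Module.annihilator R N, IsSMulRegular M x := by
  have : Subsingleton (N ⟶ M) := Ext.addEquiv₀.subsingleton_congr.mp hext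
  exact subsingleton_linearMap_iff.mp ModuleCat.homAddEquiv.symm.subsingleton

/-- For a relation `∑ hᵢ qᵢ = 0`, the coefficient vectors `c` for which all the minors
`c₀ qⱼ - cⱼ q₀` vanish modulo the ideal generated by the `hᵢ`. -/
def minorVanishing (K : Type*) [Field K] [Algebra K R] {M : Type*} [AddCommGroup M] [Module R M]
    {m : ℕ} (h : Fin (m + 1) → R) (q : Fin (m + 1) → M) : Submodule K (Fin (m + 1) → K) where
  carrier := {c | ∀ j : Fin m, algebraMap K R (c 0) • q j.succ - algebraMap K R (c j.succ) • q 0 ∈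
    Ideal.span (Set.range h) • (⊤ : Submodule R M)}
  zero_mem' := by simp
  add_mem' hc hc' j := by
    simpa only [Pi.add_apply, map_add, add_smul, add_sub_add_comm] using add_mem (hc j) (hc' j)
  smul_mem' r c hc j := by
    simpa only [Pi.smul_apply, smul_eq_mul, map_mul, mul_smul, smul_sub] using
      Submodule.smul_mem _ (algebraMap K R r) (hc j)

/-- A weak form of depth sensitivity of the Koszul complex. For generic `c` the combination
`a = ∑ cᵢ hᵢ` is regular on `M`, and the induction hypothesis for `M ⧸ aM` puts the minors
`c₀ qⱼ - cⱼ q₀` into `(h)M`; over an infinite field generic vectors do not lie in a proper subspace,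
so the minors lie in `(h)M` for every `c`. -/
theorem mem_span_smul_top_of_sum_smul_eq_zero (K : Type*) [Field K] [Infinite K] [Algebra K R]
    [IsNoetherianRing R] {N : ModuleCat.{u} R} [Module.Finite R N] {m : ℕ} {h : Fin m → R}
    {M : ModuleCat.{u} R} [Module.Finite R M]
    (hann : Module.annihilator R N ≤ Module.annihilator R M ⊔ Ideal.span (Set.range h))
    (hext : ∀ i < m, Subsingleton (Ext N M i)) {q : Fin m → M} (hq : ∑ i, h i • q i = 0)
    (i : Fin m) : q i ∈ Ideal.span (Set.range h) • (⊤ : Submodule R M) := by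
  induction m generalizing M with
  | zero => exact i.elim0
  | succ m ih =>
    obtain ⟨x, hxN, hx⟩ := exists_isSMulRegular_of_subsingleton_ext_zero (hext 0 m.succ_pos)
    rcases m with _ | m
    · obtain ⟨c, -, hreg⟩ := exists_isSMulRegular_sum_smul (K := K) hx (hann hxN) Set.finite_empty
        (Set.notMem_empty _)
      have hq₀ : (∑ i, c i • h i) • q 0 = 0 := by
        rw [Fin.sum_univ_one] at hq ⊢
        rw [Algebra.smul_def, mul_smul, hq, smul_zero]
      rw [Fin.fin_one_eq_zero i, hreg.right_eq_zero_of_smul hq₀]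
      exact zero_mem _
    have hminor (c : Fin (m + 2) → K) (hc : c 0 ≠ 0)
        (hreg : IsSMulRegular M (∑ i, c i • h i)) : c ∈ minorVanishing K h q := by
      have hc' : IsUnit (algebraMap K R (c 0)) := hc.isUnit.map _
      simp only [Algebra.smul_def] at hreg
      refine smul_sub_smul_mem_of_sum_smul_eq_zero (c := algebraMap K R ∘ c) (fun q' hq' => ?_) hq
      exact ih (M := ModuleCat.of R (QuotSMulTop (∑ i, algebraMap K R (c i) * h i) M))
        (hann.trans (sup_span_le_annihilator_quotSMulTop_sup (c := algebraMap K R ∘ c) h hc'))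
        (fun i hi => subsingleton_ext_quotSMulTop hreg (hext i (by lia))
          (hext (i + 1) (by lia))) hq'
    have hker : ⊤ ≠ LinearMap.ker (LinearMap.proj 0 : (Fin (m + 2) → K) →ₗ[K] K) := fun htop => by
      simpa using LinearMap.congr_fun (LinearMap.ker_eq_top.mp htop.symm) 1
    have htop : minorVanishing K h q = ⊤ := by
      by_contra hne
      obtain ⟨c, hc, hreg⟩ := exists_isSMulRegular_sum_smul hx (hann hxN)
        (S := {LinearMap.ker (LinearMap.proj 0), minorVanishing K h q}) (Set.toFinite _)
        (not_or.mpr ⟨hker, Ne.symm hne⟩)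
      exact hc _ (.inr rfl) (hminor c (hc _ (.inl rfl)) hreg)
    have hmem (c : Fin (m + 2) → K) : c ∈ minorVanishing K h q := htop ▸ Submodule.mem_top
    cases i using Fin.cases with
    | zero => simpa [neg_mem_iff] using hmem (Pi.single 1 1) 0
    | succ j => simpa using hmem (Pi.single 0 1) j

end RelationsAndExt

section CommonZeros

open RingTheory.Sequence Pointwise

lemma ofList_take_map_X_finRange (R : Type*) [CommSemiring R] (k i : ℕ) :
    Ideal.ofList (((List.finRange k).map (X : Fin k → MvPolynomial (Fin k) R)).take i) =
      Ideal.span (X '' {j : Fin k | j.1 < i}) := by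
  unfold Ideal.ofList
  congr 1
  ext p
  simp only [Set.mem_ofPred_eq, List.mem_take_iff_getElem, List.length_map, List.length_finRange,
    List.getElem_map, List.getElem_finRange, Set.mem_image]
  constructor
  · rintro ⟨j, hj, rfl⟩
    exact ⟨⟨j, by lia⟩, by grind, rfl⟩
  · rintro ⟨j, hj, rfl⟩
    exact ⟨j.1, by grind, rfl⟩

lemma isRegular_map_X_finRange (R : Type*) [CommRing R] [Nontrivial R] (k : ℕ) :
    IsRegular (MvPolynomial (Fin k) R)
      ((List.finRange k).map (X : Fin k → MvPolynomial (Fin k) R)) := by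
  refine ⟨(isWeaklyRegular_iff_Fin _ _).mpr fun i => ?_, fun htop => ?_⟩
  · have hik : i.1 < k := by simpa using i.2
    rw [ofList_take_map_X_finRange, isSMulRegular_iff_right_eq_zero_of_smul]
    intro p hp
    obtain ⟨p, rfl⟩ := Submodule.mkQ_surjective _ p
    have hX : ((List.finRange k).map (X : Fin k → MvPolynomial (Fin k) R))[i] = X ⟨i, hik⟩ := by
      simp
    rw [← map_smul, hX] at hp
    simp only [Submodule.mkQ_apply, Submodule.Quotient.mk_eq_zero, smul_eq_mul, Ideal.mul_top,
      mem_ideal_span_X_image] at hp ⊢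
    intro m hm
    obtain ⟨j, hji, hj⟩ := hp (m + Finsupp.single ⟨i, hik⟩ 1) (by
      rwa [mem_support_iff, add_comm, coeff_X_mul, ← mem_support_iff])
    have hne : (⟨i, hik⟩ : Fin k) ≠ j := by
      rintro rfl
      exact lt_irrefl i.1 hji
    exact ⟨j, hji, by simpa [Finsupp.single_apply, hne] using hj⟩
  · have hone : (1 : MvPolynomial (Fin k) R) ∈ Ideal.span (X '' {j : Fin k | j.1 < k}) := by
      rw [← ofList_take_map_X_finRange, List.take_of_length_le (by simp),
        ← Ideal.mul_top (Ideal.ofList _), ← smul_eq_mul, ← htop]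
      trivial
    obtain ⟨j, -, hj⟩ := mem_ideal_span_X_image.mp hone 0 (by simp)
    exact hj rfl

variable {K : Type u} [Field K] [IsAlgClosed K]

lemma X_mem_radical_span_range {σ ι : Type*} [Finite σ] {h : ι → MvPolynomial σ K}
    (hz : ∀ x : σ → K, (∀ i, eval x (h i) = 0) → x = 0) (j : σ) :
    X j ∈ (Ideal.span (Set.range h)).radical := by
  rw [← vanishingIdeal_zeroLocus_eq_radical (K := K), mem_vanishingIdeal_iff]
  intro x hx
  have hx₀ : x = 0 := hz x fun i => by
    simpa [aeval_eq_eval] using hx (h i) (Ideal.subset_span ⟨i, rfl⟩)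
  simp [hx₀]

open CategoryTheory Abelian in
lemma mem_span_of_sum_mul_eq_zero {k : ℕ} {h : Fin k → MvPolynomial (Fin k) K}
    (hz : ∀ x : Fin k → K, (∀ i, eval x (h i) = 0) → x = 0) {q : Fin k → MvPolynomial (Fin k) K}
    (hq : ∑ i, h i * q i = 0) (i : Fin k) : q i ∈ Ideal.span (Set.range h) := by
  have hreg := isRegular_map_X_finRange K k
  let N := ModuleCat.of (MvPolynomial (Fin k) K) (MvPolynomial (Fin k) K ⧸ Ideal.span (Set.range h))
  let M := ModuleCat.of (MvPolynomial (Fin k) K) (MvPolynomial (Fin k) K)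
  have hsupp : Module.support (MvPolynomial (Fin k) K) N ⊆
      PrimeSpectrum.zeroLocus (Ideal.ofList ((List.finRange k).map (X (R := K)))) := by
    rw [Module.support_eq_zeroLocus, Ideal.annihilator_quotient,
      PrimeSpectrum.zeroLocus_subset_zeroLocus_iff, Ideal.ofList, Ideal.span_le]
    intro p hp
    obtain ⟨j, -, rfl⟩ := List.mem_map.mp hp
    exact X_mem_radical_span_range hz j
  have hext (i : ℕ) (hi : i < k) : Subsingleton (Ext N M i) :=
    ModuleCat.subsingleton_ext_of_exists_isRegular _ N hsupp M hreg.2.symm.lt_top _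
      (fun r hr => Ideal.subset_span hr) hreg i (by simpa using hi)
  have hann : Module.annihilator (MvPolynomial (Fin k) K) N ≤
      Module.annihilator (MvPolynomial (Fin k) K) M ⊔ Ideal.span (Set.range h) :=
    le_sup_of_le_right Ideal.annihilator_quotient.le
  simpa using mem_span_smul_top_of_sum_smul_eq_zero K (M := M) hann hext hq i

lemma isSMulRegular_quotient_span_range {m : ℕ} {a : MvPolynomial (Fin (m + 1)) K}
    {h : Fin m → MvPolynomial (Fin (m + 1)) K}
    (hz : ∀ x : Fin (m + 1) → K, eval x a = 0 → (∀ i, eval x (h i) = 0) → x = 0) :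
    IsSMulRegular (MvPolynomial (Fin (m + 1)) K ⧸ Ideal.span (Set.range h)) a := by
  set J := Ideal.span (Set.range h)
  rw [isSMulRegular_iff_right_eq_zero_of_smul]
  intro p hp
  obtain ⟨p, rfl⟩ := Submodule.mkQ_surjective _ p
  have hap : a * p ∈ J := by
    rwa [← map_smul, Submodule.mkQ_apply, Submodule.Quotient.mk_eq_zero] at hp
  -- Each power of `a` has the zeros of `a`, so `p` lies in every `(a ^ N) + J`, and Krull's
  -- intersection theorem applies.
  have hpow (N : ℕ) : J.mkQ p ∈
      Ideal.span {a} ^ N • (⊤ : Submodule (MvPolynomial (Fin (m + 1)) K) (_ ⧸ J)) := by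
    refine Submodule.smul_mono_left (Ideal.pow_le_pow_right N.le_succ) ?_
    rw [Ideal.span_singleton_pow, Submodule.ideal_span_singleton_smul]
    have hanp : a ^ (N + 1) * p ∈ J := by
      rw [pow_succ, mul_assoc]
      exact J.mul_mem_left _ hap
    obtain ⟨c, hc⟩ := Ideal.mem_span_range_iff_exists_fun.mp hanp
    have hmem := mem_span_of_sum_mul_eq_zero (h := Fin.cons (a ^ (N + 1)) h)
      (q := Fin.cons p (-c)) (fun x hx => hz x (by simpa using hx 0) fun i => hx i.succ) (by
        simp [Fin.sum_univ_succ, ← hc, mul_comm]) 0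
    rw [Fin.range_cons, Fin.cons_zero, Ideal.span_insert, Ideal.mem_span_singleton_sup] at hmem
    obtain ⟨r, j, hj, hr⟩ := hmem
    refine ⟨J.mkQ r, Submodule.mem_top, (Submodule.Quotient.eq J).mpr ?_⟩
    change a ^ (N + 1) * r - p ∈ J
    rwa [← hr, mul_comm, sub_add_cancel_left, J.neg_mem_iff]
  obtain ⟨⟨r, hr⟩, hrp⟩ := (Ideal.mem_iInf_smul_pow_eq_bot_iff _ _).mp
    ((Submodule.mem_iInf _).mpr hpow)
  obtain ⟨s, rfl⟩ := Ideal.mem_span_singleton'.mp hr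
  rw [← hrp, mul_smul, hp, smul_zero]

end CommonZeros

section WeightedHomogeneous

variable {σ R : Type*} [CommSemiring R] {α : σ → ℕ}

lemma aeval_pow_mul_of_isWeightedHomogeneous {A : Type*} [CommSemiring A] [Algebra R A]
    {p : MvPolynomial σ R} {e : ℕ} (hp : IsWeightedHomogeneous α p e) (s : A) (y : σ → A) :
    aeval (fun j => s ^ α j * y j) p = s ^ e * aeval y p := by
  rw [aeval_def, eval₂_eq, aeval_def, eval₂_eq, Finset.mul_sum]
  refine Finset.sum_congr rfl fun m hm => ?_
  rw [← hp (mem_support_iff.mp hm), Finsupp.weight_apply, Finsupp.sum, ← Finset.prod_pow_eq_pow_sum]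
  simp only [mul_pow, Finset.prod_mul_distrib, ← pow_mul, smul_eq_mul, mul_comm (α _)]
  rw [mul_left_comm]

lemma weightedTotalDegree_le_iff {p : MvPolynomial σ R} {d : ℕ} :
    weightedTotalDegree α p ≤ d ↔ ∀ m ∈ p.support, Finsupp.weight α m ≤ d :=
  Finset.sup_le_iff

lemma sum_range_weightedHomogeneousComponent {p : MvPolynomial σ R} {d : ℕ}
    (hp : weightedTotalDegree α p ≤ d) :
    ∑ e ∈ Finset.range (d + 1), weightedHomogeneousComponent α e p = p := by
  rw [← finsum_eq_finsetSum_of_support_subset, sum_weightedHomogeneousComponent]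
  intro e he
  rw [Finset.coe_range, Set.mem_Iio, Nat.lt_succ_iff]
  by_contra! hlt
  exact he (weightedHomogeneousComponent_eq_zero _ _ (hp.trans_lt hlt))

lemma weightedHomogeneousComponent_pderiv (e : ℕ) (i : σ) (p : MvPolynomial σ R) :
    weightedHomogeneousComponent α e (pderiv i p) =
      pderiv i (weightedHomogeneousComponent α (e + α i) p) := by
  classical
  ext m
  simp [coeff_weightedHomogeneousComponent, coeff_pderiv, Finsupp.weight_single]

lemma pderiv_eq_zero_of_isWeightedHomogeneous {p : MvPolynomial σ R} {e : ℕ}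
    (hp : IsWeightedHomogeneous α p e) {i : σ} (he : e < α i) : pderiv i p = 0 := by
  refine pderiv_eq_zero_of_notMem_vars fun hi => ?_
  obtain ⟨m, hm, hmi⟩ := (mem_vars_iff_mem_support i).mp hi
  exact he.not_ge (hp (mem_support_iff.mp hm) ▸
    Finsupp.le_weight_of_ne_zero' α (Finsupp.mem_support_iff.mp hmi))

lemma weightedTotalDegree_pderiv_le {p : MvPolynomial σ R} {d : ℕ}
    (hp : weightedTotalDegree α p ≤ d) (i : σ) :
    weightedTotalDegree α (pderiv i p) ≤ d - α i := by
  refine weightedTotalDegree_le_iff.mpr fun m hm => Nat.le_sub_of_add_le ?_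
  rw [mem_support_iff, coeff_pderiv] at hm
  simpa [Finsupp.weight_single] using
    weightedTotalDegree_le_iff.mp hp _ (mem_support_iff.mpr (left_ne_zero_of_mul hm))

lemma weightedHomogeneousComponent_tsub_pderiv {p : MvPolynomial σ R} {d : ℕ}
    (hp : weightedTotalDegree α p ≤ d) (i : σ) :
    weightedHomogeneousComponent α (d - α i) (pderiv i p) =
      pderiv i (weightedHomogeneousComponent α d p) := by
  rw [weightedHomogeneousComponent_pderiv]
  rcases le_or_gt (α i) d with hi | hi
  · rw [Nat.sub_add_cancel hi]
  · rw [Nat.sub_eq_zero_of_le hi.le, zero_add, pderiv_eq_zero_of_isWeightedHomogeneous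
      (weightedHomogeneousComponent_isWeightedHomogeneous d p) hi,
      weightedHomogeneousComponent_eq_zero _ _ (hp.trans_lt hi), map_zero]

lemma isWeightedHomogeneous_rename {τ : Type*} {w : τ → ℕ} {g : σ → τ} {p : MvPolynomial σ R}
    {e : ℕ} (hp : IsWeightedHomogeneous (w ∘ g) p e) : IsWeightedHomogeneous w (rename g p) e := by
  intro m hm
  obtain ⟨u, rfl, hu⟩ := coeff_rename_ne_zero g p m hm
  rw [← hp hu]
  exact Finsupp.linearCombination_mapDomain ℕ g u

lemma weightedTotalDegree_sub_C_le {R : Type*} [CommRing R] {p : MvPolynomial σ R} {d : ℕ}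
    (hp : weightedTotalDegree α p ≤ d) (b : R) : weightedTotalDegree α (p - C b) ≤ d := by
  classical
  refine weightedTotalDegree_le_iff.mpr fun m hm => ?_
  rcases eq_or_ne m 0 with rfl | hm₀
  · simp
  · rw [mem_support_iff, coeff_sub, coeff_C, if_neg hm₀.symm, sub_zero, ← mem_support_iff] at hm
    exact weightedTotalDegree_le_iff.mp hp m hm

end WeightedHomogeneous

section Homogenization

variable {n : ℕ} {α : Fin (n + 1) → ℕ}

lemma homogenization_sub_C (d : ℕ) (f : MvPolynomial (Fin (n + 1)) ℂ) (b : ℂ) :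
    homogenization n d α (f - C b) = homogenization n d α f - C b * X 0 ^ d := by
  have hC (e : ℕ) : weightedHomogeneousComponent α e (C b) = if e = 0 then C b else 0 := by
    split_ifs with he
    · exact he ▸ (isWeightedHomogeneous_C α b).weightedHomogeneousComponent_same
    · exact (isWeightedHomogeneous_C α b).weightedHomogeneousComponent_ne e he
  simp [homogenization, sub_mul, hC, apply_ite (rename Fin.succ), ite_mul]

lemma aeval_homogenization {A : Type*} [CommSemiring A] [Algebra ℂ A] {d : ℕ}
    {f : MvPolynomial (Fin (n + 1)) ℂ} (hf : weightedTotalDegree α f ≤ d) (s : A)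
    (y : Fin (n + 1) → A) :
    aeval (Fin.cons s fun j => s ^ α j * y j : Fin (n + 2) → A) (homogenization n d α f) =
      s ^ d * aeval y f := by
  conv_rhs => rw [← sum_range_weightedHomogeneousComponent hf, map_sum, Finset.mul_sum]
  rw [homogenization, map_sum]
  refine Finset.sum_congr rfl fun e he => ?_
  rw [map_mul, aeval_rename, Fin.cons_comp_succ, aeval_pow_mul_of_isWeightedHomogeneous
    (weightedHomogeneousComponent_isWeightedHomogeneous e f), map_pow, aeval_X, Fin.cons_zero,
    mul_right_comm, ← pow_add, Nat.add_sub_of_le (Finset.mem_range_succ_iff.mp he)]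

lemma aeval_cons_zero_homogenization {A : Type*} [CommSemiring A] [Algebra ℂ A] (d : ℕ)
    (f : MvPolynomial (Fin (n + 1)) ℂ) (y : Fin (n + 1) → A) :
    aeval (Fin.cons 0 y : Fin (n + 2) → A) (homogenization n d α f) =
      aeval y (weightedHomogeneousComponent α d f) := by
  rw [homogenization, Finset.sum_range_succ, map_add, map_sum, Finset.sum_eq_zero, zero_add]
  · simp [aeval_rename, Fin.cons_comp_succ]
  · intro e he
    simp [(Nat.sub_pos_of_lt (Finset.mem_range.mp he)).ne']

lemma isWeightedHomogeneous_homogenization (d : ℕ) (f : MvPolynomial (Fin (n + 1)) ℂ) :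
    IsWeightedHomogeneous (Fin.cons 1 α : Fin (n + 2) → ℕ) (homogenization n d α f) d := by
  refine IsWeightedHomogeneous.sum _ _ _ fun e he => ?_
  have hX : IsWeightedHomogeneous (Fin.cons 1 α : Fin (n + 2) → ℕ)
      (X 0 ^ (d - e) : MvPolynomial (Fin (n + 2)) ℂ) (d - e) := by
    simpa using (isWeightedHomogeneous_X ℂ (Fin.cons 1 α : Fin (n + 2) → ℕ) 0).pow (d - e)
  have hren : IsWeightedHomogeneous (Fin.cons 1 α : Fin (n + 2) → ℕ)
      (rename Fin.succ (weightedHomogeneousComponent α e f)) e :=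
    isWeightedHomogeneous_rename (weightedHomogeneousComponent_isWeightedHomogeneous e f)
  simpa [Nat.add_sub_of_le (Finset.mem_range_succ_iff.mp he)] using hren.mul hX

lemma pderiv_succ_homogenization {d : ℕ} {f : MvPolynomial (Fin (n + 1)) ℂ}
    (hf : weightedTotalDegree α f ≤ d) (i : Fin (n + 1)) :
    pderiv i.succ (homogenization n d α f) = homogenization n (d - α i) α (pderiv i f) := by
  have hterm (p : MvPolynomial (Fin (n + 1)) ℂ) (k : ℕ) :
      pderiv i.succ (rename Fin.succ p * X 0 ^ k) = rename Fin.succ (pderiv i p) * X 0 ^ k := by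
    rw [pderiv_mul, pderiv_rename (Fin.succ_injective _), pderiv_pow,
      pderiv_X_of_ne (Fin.succ_ne_zero i).symm, mul_zero, mul_zero, add_zero]
  have hlow (e : ℕ) (he : e < α i) : pderiv i (weightedHomogeneousComponent α e f) = 0 :=
    pderiv_eq_zero_of_isWeightedHomogeneous
      (weightedHomogeneousComponent_isWeightedHomogeneous e f) he
  simp only [homogenization, map_sum, hterm, weightedHomogeneousComponent_pderiv]
  rcases le_or_gt (α i) d with hi | hi
  · obtain ⟨k, rfl⟩ := Nat.exists_eq_add_of_le hi
    rw [add_assoc (α i) k 1, Finset.sum_range_add, Finset.sum_eq_zero, zero_add,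
      Nat.add_sub_cancel_left]
    · exact Finset.sum_congr rfl fun e _ => by rw [Nat.add_sub_add_left, add_comm e]
    · intro e he
      rw [hlow e (Finset.mem_range.mp he), map_zero, zero_mul]
  · rw [Nat.sub_eq_zero_of_le hi.le, Finset.sum_range_one, zero_add,
      weightedHomogeneousComponent_eq_zero _ _ (hf.trans_lt hi), map_zero, map_zero, zero_mul]
    refine Finset.sum_eq_zero fun e he => ?_
    rw [hlow e ((Finset.mem_range_succ_iff.mp he).trans_lt hi), map_zero, zero_mul]

end Homogenization

section Finiteness

variable {σ R : Type*} [CommRing R]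

lemma finite_quotient_of_X_mem_radical [Finite σ] {J : Ideal (MvPolynomial σ R)}
    (hJ : ∀ j, X j ∈ J.radical) : Module.Finite R (MvPolynomial σ R ⧸ J) := by
  have hint : Algebra.IsIntegral R (MvPolynomial σ R ⧸ J) := by
    refine ⟨fun a => ?_⟩
    obtain ⟨p, rfl⟩ := Ideal.Quotient.mk_surjective a
    induction p using MvPolynomial.induction_on with
    | C r => exact isIntegral_algebraMap
    | add p q hp hq => exact map_add (Ideal.Quotient.mk J) p q ▸ hp.add hq
    | mul_X p j hp =>
      obtain ⟨k, hk⟩ := hJ j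
      refine map_mul (Ideal.Quotient.mk J) p (X j) ▸ hp.mul ⟨Polynomial.X ^ k,
        Polynomial.monic_X_pow k, ?_⟩
      rw [Polynomial.eval₂_X_pow, ← map_pow, Ideal.Quotient.eq_zero_iff_mem]
      exact hk
  exact Algebra.IsIntegral.finite

lemma sup_restrictScalars_eq_top_iff_map_mk {A : Type*} [CommRing A] [Algebra R A]
    {U : Submodule R A} {J : Ideal A} :
    U ⊔ J.restrictScalars R = ⊤ ↔ U.map (Ideal.Quotient.mkₐ R J).toLinearMap = ⊤ := by
  have hker : (Ideal.Quotient.mkₐ R J).toLinearMap.ker = J.restrictScalars R := by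
    ext a
    exact Ideal.Quotient.eq_zero_iff_mem
  have hrange : (Ideal.Quotient.mkₐ R J).toLinearMap.range = ⊤ :=
    LinearMap.range_eq_top.mpr (Ideal.Quotient.mkₐ_surjective R J)
  rw [← hker, ← Submodule.comap_map_eq, ← LinearMap.range_le_iff_comap, hrange, top_le_iff]

lemma exists_finset_map_restrictSupport_eq_top {B : Type*} [CommRing B] [Algebra R B]
    [Module.Finite R B] {φ : MvPolynomial σ R →ₐ[R] B} (hφ : Function.Surjective φ) :
    ∃ s : Finset (σ →₀ ℕ), (restrictSupport R (s : Set (σ →₀ ℕ))).map φ.toLinearMap = ⊤ := by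
  classical
  obtain ⟨t, ht⟩ := Module.Finite.fg_top (R := R) (M := B)
  choose lift hlift using hφ
  refine ⟨t.biUnion fun a => (lift a).support, ?_⟩
  rw [eq_top_iff, ← ht, Submodule.span_le]
  intro a ha
  refine ⟨lift a, (mem_restrictSupport_iff R).mpr ?_, hlift a⟩
  exact_mod_cast Finset.subset_biUnion_of_mem (fun a => (lift a).support) ha

lemma finite_quotient_of_restrictSupport_sup_eq_top {J : Ideal (MvPolynomial σ R)}
    {s : Finset (σ →₀ ℕ)}
    (hs : restrictSupport R (s : Set (σ →₀ ℕ)) ⊔ J.restrictScalars R = ⊤) :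
    Module.Finite R (MvPolynomial σ R ⧸ J) := by
  have hfg : (restrictSupport R (s : Set (σ →₀ ℕ))).FG := by
    rw [restrictSupport_eq_span]
    exact Submodule.fg_span (s.finite_toSet.image _)
  exact ⟨sup_restrictScalars_eq_top_iff_map_mk.mp hs ▸ hfg.map _⟩

section TopForms

variable {α : σ → ℕ}

lemma weightedHomogeneousComponent_mul_mem {p : MvPolynomial σ R} {e N : ℕ}
    (hp : weightedTotalDegree α p ≤ e) {T : Submodule R (MvPolynomial σ R)}
    (hT : ∀ q, q * p ∈ T) (hlow : ∀ M < N, ∀ q, IsWeightedHomogeneous α q M → q ∈ T)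
    (q : MvPolynomial σ R) :
    weightedHomogeneousComponent α N (q * weightedHomogeneousComponent α e p) ∈ T := by
  classical
  induction q using MvPolynomial.induction_on' with
  | add q r hq hr => rw [add_mul, map_add]; exact T.add_mem hq hr
  | monomial γ c =>
    have hmul (k : ℕ) : IsWeightedHomogeneous α
        (monomial γ c * weightedHomogeneousComponent α k p) (Finsupp.weight α γ + k) :=
      (isWeightedHomogeneous_monomial α γ c rfl).mul
        (weightedHomogeneousComponent_isWeightedHomogeneous k p)
    rw [weightedHomogeneousComponent_of_mem (hmul e)]
    split_ifs with hN
    · have htop : monomial γ c * weightedHomogeneousComponent α e p = monomial γ c * p -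
          ∑ k ∈ Finset.range e, monomial γ c * weightedHomogeneousComponent α k p := by
        rw [eq_sub_iff_add_eq', ← Finset.mul_sum, ← mul_add, ← Finset.sum_range_succ,
          sum_range_weightedHomogeneousComponent hp]
      rw [htop]
      refine T.sub_mem (hT _) (T.sum_mem fun k hk => hlow _ ?_ _ (hmul k))
      have := Finset.mem_range.mp hk
      lia
    · exact T.zero_mem

theorem restrictSupport_sup_span_eq_top {ι : Type*} {h : ι → MvPolynomial σ R}
    {e : ι → ℕ} (he : ∀ i, weightedTotalDegree α (h i) ≤ e i) {s : Set (σ →₀ ℕ)}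
    (hs : restrictSupport R s ⊔ (Ideal.span (Set.range fun i =>
      weightedHomogeneousComponent α (e i) (h i))).restrictScalars R = ⊤) :
    restrictSupport R s ⊔ (Ideal.span (Set.range h)).restrictScalars R = ⊤ := by
  classical
  set T := restrictSupport R s ⊔ (Ideal.span (Set.range h)).restrictScalars R
  have hT (i : ι) (q : MvPolynomial σ R) : q * h i ∈ T :=
    Submodule.mem_sup_right (Ideal.mul_mem_left _ q (Ideal.subset_span ⟨i, rfl⟩))
  have hcomp (N : ℕ) : ∀ p, IsWeightedHomogeneous α p N → p ∈ T := by
    induction N using Nat.strong_induction_on with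
    | _ N ih =>
      intro p hp
      obtain ⟨r, hr, v, hv, rfl⟩ := Submodule.mem_sup.mp (hs ▸ Submodule.mem_top (x := p))
      obtain ⟨c, rfl⟩ := Finsupp.mem_span_range_iff_exists_finsupp.mp hv
      rw [← weightedHomogeneousComponent_eq_self hp, map_add, Finsupp.sum, map_sum]
      refine T.add_mem (Submodule.mem_sup_left ?_) (T.sum_mem fun i _ => ?_)
      · rw [mem_restrictSupport_iff, support_weightedHomogeneousComponent]
        exact (Finset.coe_subset.mpr (Finset.filter_subset _ _)).trans hr
      · exact weightedHomogeneousComponent_mul_mem (he i) (hT i) ih (c i)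
  refine eq_top_iff.mpr fun p _ => ?_
  rw [← sum_range_weightedHomogeneousComponent (le_refl (weightedTotalDegree α p))]
  exact T.sum_mem fun e _ => hcomp e _ (weightedHomogeneousComponent_isWeightedHomogeneous e p)

theorem finite_quotient_span_of_finite_quotient_span_top {ι : Type*}
    {h : ι → MvPolynomial σ R} {e : ι → ℕ} (he : ∀ i, weightedTotalDegree α (h i) ≤ e i)
    [Module.Finite R (MvPolynomial σ R ⧸ Ideal.span (Set.range fun i =>
      weightedHomogeneousComponent α (e i) (h i)))] :
    Module.Finite R (MvPolynomial σ R ⧸ Ideal.span (Set.range h)) := by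
  obtain ⟨s, hs⟩ := exists_finset_map_restrictSupport_eq_top (Ideal.Quotient.mkₐ_surjective R
    (Ideal.span (Set.range fun i => weightedHomogeneousComponent α (e i) (h i))))
  exact finite_quotient_of_restrictSupport_sup_eq_top (restrictSupport_sup_span_eq_top he
    (sup_restrictScalars_eq_top_iff_map_mk.mpr hs))

end TopForms

end Finiteness

section Rank

variable {K : Type*} [Field K]

lemma rank_quotient_map_of_injective {V W : Type u} [AddCommGroup V] [Module K V] [AddCommGroup W]
    [Module K W] {g : V →ₗ[K] W} (hg : Function.Injective g) (p : Submodule K V) :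
    Module.rank K (W ⧸ p.map g) = Module.rank K (W ⧸ g.range) + Module.rank K (V ⧸ p) := by
  rw [LinearMap.rank_quot_submodule_map_eq]
  congr 1
  exact (Submodule.Quotient.equiv p _ (LinearEquiv.ofInjective g hg) rfl).rank_eq.symm

lemma rank_quotient_range_eq_of_comp_eq_comp {V W : Type u} [AddCommGroup V] [Module K V]
    [AddCommGroup W] [Module K W] {θ : V →ₗ[K] W} (hθ : Function.Injective θ)
    [Module.Finite K (W ⧸ θ.range)] {a : V →ₗ[K] V} {b : W →ₗ[K] W} (hb : Function.Injective b)
    (h : θ ∘ₗ a = b ∘ₗ θ) :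
    Module.rank K (V ⧸ a.range) = Module.rank K (W ⧸ b.range) := by
  have hsum : Module.rank K (W ⧸ θ.range) + Module.rank K (V ⧸ a.range) =
      Module.rank K (W ⧸ θ.range) + Module.rank K (W ⧸ b.range) := by
    rw [← rank_quotient_map_of_injective hθ, ← LinearMap.range_comp, h, LinearMap.range_comp,
      rank_quotient_map_of_injective hb, add_comm]
  exact Cardinal.eq_of_add_eq_add_left hsum (Module.rank_lt_aleph0 K _)

section Algebra

variable {A B : Type u} [CommRing A] [Algebra K A] [CommRing B] [Algebra K B]

lemma rank_quotient_span_singleton (a : A) :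
    Module.rank K (A ⧸ Ideal.span {a}) = Module.rank K (A ⧸ (LinearMap.mulLeft K a).range) := by
  have h : (Ideal.span {a}).restrictScalars K = (LinearMap.mulLeft K a).range := by
    ext x
    simp [Ideal.mem_span_singleton', mul_comm a]
  rw [← h]
  exact (Submodule.Quotient.restrictScalarsEquiv K (Ideal.span {a})).rank_eq.symm

theorem rank_quotient_span_singleton_map {θ : A →ₐ[K] B} (hθ : Function.Injective θ)
    [Module.Finite K (B ⧸ θ.toLinearMap.range)] {a : A} (ha : IsLeftRegular (θ a)) :
    Module.rank K (A ⧸ Ideal.span {a}) = Module.rank K (B ⧸ Ideal.span {θ a}) := by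
  rw [rank_quotient_span_singleton, rank_quotient_span_singleton]
  exact rank_quotient_range_eq_of_comp_eq_comp (θ := θ.toLinearMap) hθ ha
    (LinearMap.ext fun x => map_mul θ a x)

lemma rank_quotient_sup_span_singleton (J : Ideal A) (a : A) :
    Module.rank K (A ⧸ J ⊔ Ideal.span {a}) =
      Module.rank K ((A ⧸ J) ⧸ Ideal.span {Ideal.Quotient.mk J a}) := by
  have hmap : (Ideal.span {a}).map (Ideal.Quotient.mkₐ K J) =
      Ideal.span {Ideal.Quotient.mk J a} := by
    rw [Ideal.map_span, Set.image_singleton, Ideal.Quotient.mkₐ_eq_mk]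
  rw [← hmap]
  exact (DoubleQuot.quotQuotEquivQuotSupₐ K J _).toLinearEquiv.rank_eq.symm

theorem rank_quotient_ker_sup_span_singleton {φ : A →ₐ[K] B}
    [Module.Finite K (B ⧸ φ.toLinearMap.range)] {t : A} (ht : IsLeftRegular (φ t)) :
    Module.rank K (A ⧸ RingHom.ker φ ⊔ Ideal.span {t}) =
      Module.rank K (B ⧸ Ideal.span {φ t}) := by
  have hrange : (Ideal.kerLiftAlg φ).toLinearMap.range = φ.toLinearMap.range :=
    (LinearMap.range_comp_of_range_eq_top (Ideal.kerLiftAlg φ).toLinearMap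
      (f := (Ideal.Quotient.mkₐ K (RingHom.ker φ)).toLinearMap)
      (LinearMap.range_eq_top.mpr (Ideal.Quotient.mkₐ_surjective K _))).symm
  have : Module.Finite K (B ⧸ (Ideal.kerLiftAlg φ).toLinearMap.range) := by
    rwa [hrange]
  rw [rank_quotient_sup_span_singleton]
  exact rank_quotient_span_singleton_map (Ideal.kerLiftAlg_injective φ)
    (a := Ideal.Quotient.mk _ t) ht

lemma rank_quotient_comap_of_surjective {φ : A →ₐ[K] B} (hφ : Function.Surjective φ)
    (J : Ideal B) : Module.rank K (A ⧸ J.comap φ) = Module.rank K (B ⧸ J) := by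
  have hker : RingHom.ker ((Ideal.Quotient.mkₐ K J).comp φ) = J.comap φ := by
    ext x
    simp [RingHom.mem_ker, Ideal.Quotient.eq_zero_iff_mem]
  rw [← hker]
  have hsurj : Function.Surjective ((Ideal.Quotient.mkₐ K J).comp φ) :=
    (Ideal.Quotient.mkₐ_surjective K J).comp hφ
  exact (Ideal.quotientKerAlgEquivOfSurjective hsurj).toLinearEquiv.rank_eq

lemma rank_quotient_span_monic {q : Polynomial A} (hq : q.Monic) :
    Module.rank K (Polynomial A ⧸ Ideal.span {q}) = q.natDegree * Module.rank K A := by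
  have e : (Polynomial A ⧸ Ideal.span {q}) ≃ₗ[K] Fin q.natDegree → A :=
    (AdjoinRoot.powerBasis' hq).basis.equivFun.restrictScalars K
  rw [e.rank_eq, rank_fun_eq_lift_mul, Fintype.card_fin, Cardinal.lift_uzero]

lemma rank_quotient_span_X_pow_mul_C (k : ℕ) {a : A} (ha : IsUnit a) :
    Module.rank K (Polynomial A ⧸ Ideal.span {Polynomial.X ^ k * Polynomial.C a}) =
      k * Module.rank K A := by
  rw [Ideal.span_singleton_mul_right_unit (ha.map Polynomial.C),
    rank_quotient_span_monic (Polynomial.monic_X_pow k)]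
  nontriviality A
  rw [Polynomial.natDegree_X_pow]

end Algebra

end Rank

section ReesMap

variable {n : ℕ} {α : Fin (n + 1) → ℕ}

variable {B : Type*} [CommRing B] [Algebra ℂ B]

/-- The comparison map `x₀ ↦ T`, `xⱼ ↦ T ^ αⱼ * yⱼ` from `ℂ[x₀, x]` to `B[T]`. When the `yⱼ`
generate `B`, its image is the Rees algebra of `B` for the filtration by weighted degree. -/
def reesMap (α : Fin (n + 1) → ℕ) (y : Fin (n + 1) → B) :
    MvPolynomial (Fin (n + 2)) ℂ →ₐ[ℂ] Polynomial B :=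
  aeval (Fin.cons Polynomial.X fun j => Polynomial.X ^ α j * Polynomial.C (y j))

variable {y : Fin (n + 1) → B}

lemma reesMap_X_zero : reesMap α y (X 0) = Polynomial.X :=
  aeval_X _ 0

lemma reesMap_X_succ (j : Fin (n + 1)) :
    reesMap α y (X j.succ) = Polynomial.X ^ α j * Polynomial.C (y j) :=
  aeval_X _ j.succ

lemma reesMap_homogenization {d : ℕ} {f : MvPolynomial (Fin (n + 1)) ℂ}
    (hf : weightedTotalDegree α f ≤ d) : reesMap α y (homogenization n d α f) =
      Polynomial.X ^ d * Polynomial.C (aeval y f) := by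
  rw [reesMap, aeval_homogenization hf]
  exact congrArg _ (aeval_algebraMap_apply (Polynomial B) y f)

lemma reesMap_rename_monomial (m : Fin (n + 1) →₀ ℕ) (c : ℂ) :
    reesMap α y (rename Fin.succ (monomial m c)) =
      Polynomial.monomial (Finsupp.weight α m) (aeval y (monomial m c)) := by
  rw [reesMap, aeval_rename, Fin.cons_comp_succ, aeval_pow_mul_of_isWeightedHomogeneous
    (isWeightedHomogeneous_monomial α m c rfl), ← Polynomial.C_mul_X_pow_eq_monomial,
    ← Polynomial.X_pow_mul_C]
  exact congrArg _ (aeval_algebraMap_apply (Polynomial B) y (monomial m c))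

lemma monomial_aeval_monomial_mem_range_reesMap {N : ℕ} {m : Fin (n + 1) →₀ ℕ}
    (hm : Finsupp.weight α m ≤ N) (c : ℂ) :
    Polynomial.monomial N (aeval y (monomial m c)) ∈ (reesMap α y).toLinearMap.range := by
  refine ⟨X 0 ^ (N - Finsupp.weight α m) * rename Fin.succ (monomial m c), ?_⟩
  rw [AlgHom.toLinearMap_apply, map_mul, map_pow, reesMap_X_zero, reesMap_rename_monomial,
    Polynomial.X_pow_mul_monomial, Nat.add_sub_of_le hm]

lemma exists_forall_monomial_mem_range_reesMap (α : Fin (n + 1) → ℕ) [Module.Finite ℂ B]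
    (hy : Function.Surjective (aeval (R := ℂ) y)) :
    ∃ M, ∀ N ≥ M, ∀ a, Polynomial.monomial N a ∈ (reesMap α y).toLinearMap.range := by
  obtain ⟨s, hs⟩ := exists_finset_map_restrictSupport_eq_top hy
  refine ⟨s.sup (Finsupp.weight α), fun N hN a => ?_⟩
  obtain ⟨p, hp, rfl⟩ := hs ▸ Submodule.mem_top (x := a)
  rw [p.as_sum]
  simp only [AlgHom.toLinearMap_apply, map_sum]
  exact Submodule.sum_mem _ fun m hm => monomial_aeval_monomial_mem_range_reesMap
    ((Finset.le_sup (f := Finsupp.weight α) (hp hm)).trans hN) _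

theorem finite_quotient_range_reesMap (α : Fin (n + 1) → ℕ) [Module.Finite ℂ B]
    (hy : Function.Surjective (aeval (R := ℂ) y)) :
    Module.Finite ℂ (Polynomial B ⧸ (reesMap α y).toLinearMap.range) := by
  obtain ⟨M, hM⟩ := exists_forall_monomial_mem_range_reesMap α hy
  let low : (Fin M → B) →ₗ[ℂ] Polynomial B :=
    ((Polynomial.degreeLT B M).subtype ∘ₗ
      (Polynomial.degreeLTEquiv B M).symm.toLinearMap).restrictScalars ℂ
  have hlow {p : Polynomial B} (hp : p ∈ Polynomial.degreeLT B M) : p ∈ low.range :=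
    ⟨Polynomial.degreeLTEquiv B M ⟨p, hp⟩, by simp [low]⟩
  refine Module.Finite.of_surjective ((reesMap α y).toLinearMap.range.mkQ ∘ₗ low) ?_
  rw [← LinearMap.range_eq_top, LinearMap.range_comp, Submodule.map_mkQ_eq_top, eq_top_iff]
  rintro p -
  induction p using Polynomial.induction_on' with
  | add p q hp hq => exact Submodule.add_mem _ hp hq
  | monomial N a =>
    rcases lt_or_ge N M with hN | hN
    · exact Submodule.mem_sup_right (hlow (Polynomial.mem_degreeLT.mpr
        ((Polynomial.degree_monomial_le N a).trans_lt (Nat.cast_lt.mpr hN))))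
    · exact Submodule.mem_sup_left (hM N hN a)

section Kernel

variable {ι : Type*} {e : ι → ℕ} {h : ι → MvPolynomial (Fin (n + 1)) ℂ}

/-- The ideal generated by the homogenizations of the `h i` with respect to the degrees `e i`. -/
def homogenizationIdeal (α : Fin (n + 1) → ℕ) (e : ι → ℕ) (h : ι → MvPolynomial (Fin (n + 1)) ℂ) :
    Ideal (MvPolynomial (Fin (n + 2)) ℂ) :=
  Ideal.span (Set.range fun i => homogenization n (e i) α (h i))

lemma homogenizationIdeal_le_ker_reesMap (he : ∀ i, weightedTotalDegree α (h i) ≤ e i)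
    (hyh : ∀ i, aeval y (h i) = 0) : homogenizationIdeal α e h ≤ RingHom.ker (reesMap α y) := by
  rw [homogenizationIdeal, Ideal.span_le]
  rintro _ ⟨i, rfl⟩
  rw [SetLike.mem_coe, RingHom.mem_ker, reesMap_homogenization (he i), hyh, map_zero, mul_zero]

lemma exists_comp_reesMap_eq {L : Type*} [CommRing L] [Algebra ℂ L]
    (he : ∀ i, weightedTotalDegree α (h i) ≤ e i) (hy : Function.Surjective (aeval (R := ℂ) y))
    (hker : RingHom.ker (aeval (R := ℂ) y) = Ideal.span (Set.range h))
    {m : MvPolynomial (Fin (n + 2)) ℂ →ₐ[ℂ] L} (hm : IsUnit (m (X 0)))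
    (hmh : ∀ i, m (homogenization n (e i) α (h i)) = 0) :
    ∃ ψ : Polynomial B →ₐ[ℂ] L, ψ.comp (reesMap α y) = m := by
  obtain ⟨u, hu⟩ := hm
  set z : Fin (n + 1) → L := fun j => ↑(u⁻¹ ^ α j) * m (X j.succ)
  have hz (j : Fin (n + 1)) : m (X j.succ) = u ^ α j * z j := by
    have hu' : (↑(u ^ α j) : L) * ↑(u⁻¹ ^ α j) = 1 := by
      rw [inv_pow, Units.mul_inv]
    rw [← Units.val_pow_eq_pow_val, ← mul_assoc, hu', one_mul]
  have hm_eq : m = aeval (Fin.cons (u : L) fun j => u ^ α j * z j) := by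
    refine algHom_ext fun i => Fin.cases ?_ (fun j => ?_) i
    · rw [aeval_X, Fin.cons_zero, hu]
    · rw [aeval_X, Fin.cons_succ, hz]
  have hzh : RingHom.ker (aeval (R := ℂ) y) ≤ RingHom.ker (aeval (R := ℂ) z) := by
    rw [hker, Ideal.span_le]
    rintro _ ⟨i, rfl⟩
    have hi := hmh i
    rw [hm_eq, aeval_homogenization (he i)] at hi
    exact (u.isUnit.pow (e i)).mul_right_eq_zero.mp hi
  let χ := AlgHom.liftOfSurjective (aeval (R := ℂ) y) hy (aeval z) hzh
  have hχ (j : Fin (n + 1)) : χ (y j) = z j := by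
    have hj := AlgHom.liftOfSurjective_apply (aeval (R := ℂ) y) hy (aeval z) hzh (X j)
    rwa [aeval_X, aeval_X] at hj
  refine ⟨Polynomial.eval₂AlgHom χ u fun _ => Commute.all _ _,
    algHom_ext fun i => Fin.cases ?_ (fun j => ?_) i⟩
  · simp [reesMap_X_zero, hu]
  · rw [AlgHom.comp_apply, reesMap_X_succ, hz, mul_comm _ (z j)]
    simp [hχ]

theorem ker_reesMap (he : ∀ i, weightedTotalDegree α (h i) ≤ e i)
    (hy : Function.Surjective (aeval (R := ℂ) y))
    (hker : RingHom.ker (aeval (R := ℂ) y) = Ideal.span (Set.range h))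
    (hreg : IsSMulRegular (MvPolynomial (Fin (n + 2)) ℂ ⧸ homogenizationIdeal α e h)
      (X 0 : MvPolynomial (Fin (n + 2)) ℂ)) :
    RingHom.ker (reesMap α y) = homogenizationIdeal α e h := by
  have hyh (i : ι) : aeval y (h i) = 0 :=
    RingHom.mem_ker.mp (hker ▸ Ideal.subset_span ⟨i, rfl⟩)
  refine le_antisymm (fun p hp => ?_) (homogenizationIdeal_le_ker_reesMap he hyh)
  set x₀ := Ideal.Quotient.mk (homogenizationIdeal α e h) (X 0)
  have hx₀ : Submonoid.powers x₀ ≤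
      nonZeroDivisors (MvPolynomial (Fin (n + 2)) ℂ ⧸ homogenizationIdeal α e h) := by
    refine Submonoid.powers_le.mpr (mem_nonZeroDivisors_iff_right.mpr fun z hz => hreg ?_)
    exact (mul_comm x₀ z).trans (hz.trans (mul_zero x₀).symm)
  have hinj := IsLocalization.injective (Localization.Away x₀) hx₀
  obtain ⟨ψ, hψ⟩ := exists_comp_reesMap_eq he hy hker (m := (IsScalarTower.toAlgHom ℂ _
    (Localization.Away x₀)).comp (Ideal.Quotient.mkₐ ℂ (homogenizationIdeal α e h)))
    (IsLocalization.Away.algebraMap_isUnit x₀) fun i => by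
      have hi : homogenization n (e i) α (h i) ∈ homogenizationIdeal α e h :=
        Ideal.subset_span ⟨i, rfl⟩
      simp [Ideal.Quotient.eq_zero_iff_mem.mpr hi]
  have hp₀ := DFunLike.congr_fun hψ p
  rw [AlgHom.comp_apply, RingHom.mem_ker.mp hp, map_zero] at hp₀
  exact Ideal.Quotient.eq_zero_iff_mem.mp (hinj (hp₀.symm.trans (map_zero _).symm))

end Kernel

end ReesMap

section RankHomogenizationIdeal

variable {n : ℕ} {α : Fin (n + 1) → ℕ}

lemma ker_aeval_cons_zero_X :
    RingHom.ker (aeval (Fin.cons 0 X) :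
      MvPolynomial (Fin (n + 2)) ℂ →ₐ[ℂ] MvPolynomial (Fin (n + 1)) ℂ) = Ideal.span {X 0} := by
  refine le_antisymm (fun p hp => ?_) ?_
  · have hid : ((Ideal.Quotient.mkₐ ℂ (Ideal.span {X 0})).comp (rename Fin.succ)).comp
        (aeval (Fin.cons 0 X)) =
        Ideal.Quotient.mkₐ ℂ (Ideal.span {(X 0 : MvPolynomial (Fin (n + 2)) ℂ)}) := by
      refine algHom_ext fun i => Fin.cases ?_ (fun j => ?_) i
      · simp [Ideal.Quotient.eq_zero_iff_mem.mpr (Ideal.mem_span_singleton_self _)]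
      · simp
    have hp₀ := DFunLike.congr_fun hid p
    rw [AlgHom.comp_apply, RingHom.mem_ker.mp hp, map_zero] at hp₀
    exact Ideal.Quotient.eq_zero_iff_mem.mp hp₀.symm
  · rw [Ideal.span_singleton_le_iff_mem, RingHom.mem_ker, aeval_X, Fin.cons_zero]

lemma aeval_cons_zero_X_surjective : Function.Surjective (aeval (Fin.cons 0 X) :
    MvPolynomial (Fin (n + 2)) ℂ →ₐ[ℂ] MvPolynomial (Fin (n + 1)) ℂ) := by
  refine fun p => ⟨rename Fin.succ p, ?_⟩
  rw [aeval_rename, Fin.cons_comp_succ, aeval_X_left_apply]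

section Top

variable {ι : Type*} (e : ι → ℕ) (h : ι → MvPolynomial (Fin (n + 1)) ℂ)

lemma homogenizationIdeal_sup_span_X_zero :
    homogenizationIdeal α e h ⊔ Ideal.span {X 0} =
      (Ideal.span (Set.range fun i => weightedHomogeneousComponent α (e i) (h i))).comap
        (aeval (R := ℂ) (Fin.cons 0 X)) := by
  have hmap : (homogenizationIdeal α e h).map (aeval (R := ℂ) (Fin.cons 0 X)) =
      Ideal.span (Set.range fun i => weightedHomogeneousComponent α (e i) (h i)) := by
    simp only [homogenizationIdeal, Ideal.map_span, ← Set.range_comp, Function.comp_def,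
      aeval_cons_zero_homogenization, aeval_X_left_apply]
  rw [← hmap, Ideal.comap_map_of_surjective _ aeval_cons_zero_X_surjective, ← ker_aeval_cons_zero_X]
  rfl

lemma rank_quotient_homogenizationIdeal_sup_span_X_zero :
    Module.rank ℂ (MvPolynomial (Fin (n + 2)) ℂ ⧸ homogenizationIdeal α e h ⊔ Ideal.span {X 0}) =
      Module.rank ℂ (MvPolynomial (Fin (n + 1)) ℂ ⧸
        Ideal.span (Set.range fun i => weightedHomogeneousComponent α (e i) (h i))) := by
  rw [homogenizationIdeal_sup_span_X_zero]
  exact rank_quotient_comap_of_surjective aeval_cons_zero_X_surjective _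

end Top

theorem rank_quotient_homogenizationIdeal_sup_span_singleton {B : Type} [CommRing B]
    [Algebra ℂ B] [Module.Finite ℂ B] {y : Fin (n + 1) → B} {ι : Type*} {e : ι → ℕ}
    {h : ι → MvPolynomial (Fin (n + 1)) ℂ} (he : ∀ i, weightedTotalDegree α (h i) ≤ e i)
    (hy : Function.Surjective (aeval (R := ℂ) y))
    (hker : RingHom.ker (aeval (R := ℂ) y) = Ideal.span (Set.range h))
    (hreg : IsSMulRegular (MvPolynomial (Fin (n + 2)) ℂ ⧸ homogenizationIdeal α e h)
      (X 0 : MvPolynomial (Fin (n + 2)) ℂ))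
    {t : MvPolynomial (Fin (n + 2)) ℂ} {k : ℕ} {u : B} (hu : IsUnit u)
    (ht : reesMap α y t = Polynomial.X ^ k * Polynomial.C u) :
    Module.rank ℂ (MvPolynomial (Fin (n + 2)) ℂ ⧸ homogenizationIdeal α e h ⊔ Ideal.span {t}) =
      k * Module.rank ℂ B := by
  have := finite_quotient_range_reesMap α hy
  have ht_reg : IsLeftRegular (reesMap α y t) :=
    ht ▸ (Polynomial.isRegular_X_pow k).left.mul (hu.map Polynomial.C).isRegular.left
  rw [← ker_reesMap he hy hker hreg, ← rank_quotient_span_X_pow_mul_C k hu, ← ht]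
  exact rank_quotient_ker_sup_span_singleton ht_reg

section Tame

variable {e : Fin (n + 1) → ℕ} {h : Fin (n + 1) → MvPolynomial (Fin (n + 1)) ℂ}

lemma isSMulRegular_X_zero_quotient_homogenizationIdeal
    (htop : ∀ x, (∀ i, eval x (weightedHomogeneousComponent α (e i) (h i)) = 0) → x = 0) :
    IsSMulRegular (MvPolynomial (Fin (n + 2)) ℂ ⧸ homogenizationIdeal α e h)
      (X 0 : MvPolynomial (Fin (n + 2)) ℂ) := by
  refine isSMulRegular_quotient_span_range fun x hx₀ hx => ?_
  rw [eval_X] at hx₀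
  have hx_eq : x = Fin.cons 0 (Fin.tail x) := by rw [← hx₀, Fin.cons_self_tail]
  have htail : Fin.tail x = 0 := htop _ fun i => by
    have hi := hx i
    rwa [hx_eq, ← coe_aeval_eq_eval, RingHom.coe_coe, aeval_cons_zero_homogenization] at hi
  rw [hx_eq, htail]
  exact Matrix.cons_zero_zero

theorem rank_quotient_homogenizationIdeal_sup_eq_mul_rank_top {B : Type} [CommRing B]
    [Algebra ℂ B] {y : Fin (n + 1) → B} (he : ∀ i, weightedTotalDegree α (h i) ≤ e i)
    (htop : ∀ x, (∀ i, eval x (weightedHomogeneousComponent α (e i) (h i)) = 0) → x = 0)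
    (hy : Function.Surjective (aeval (R := ℂ) y))
    (hker : RingHom.ker (aeval (R := ℂ) y) = Ideal.span (Set.range h))
    {t : MvPolynomial (Fin (n + 2)) ℂ} {k : ℕ} {u : B} (hu : IsUnit u)
    (ht : reesMap α y t = Polynomial.X ^ k * Polynomial.C u) :
    Module.rank ℂ (MvPolynomial (Fin (n + 2)) ℂ ⧸ homogenizationIdeal α e h ⊔ Ideal.span {t}) =
      k * Module.rank ℂ (MvPolynomial (Fin (n + 1)) ℂ ⧸
        Ideal.span (Set.range fun i => weightedHomogeneousComponent α (e i) (h i))) := by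
  have hreg := isSMulRegular_X_zero_quotient_homogenizationIdeal htop
  have := finite_quotient_of_X_mem_radical (X_mem_radical_span_range htop)
  have := finite_quotient_span_of_finite_quotient_span_top he
  have : Module.Finite ℂ B := Module.Finite.equiv ((Ideal.quotientEquivAlgOfEq ℂ hker.symm).trans
    (Ideal.quotientKerAlgEquivOfSurjective hy)).toLinearEquiv
  have hX : reesMap α y (X 0) = Polynomial.X ^ 1 * Polynomial.C 1 := by
    rw [reesMap_X_zero, pow_one, map_one, mul_one]
  rw [rank_quotient_homogenizationIdeal_sup_span_singleton he hy hker hreg hu ht,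
    ← rank_quotient_homogenizationIdeal_sup_span_X_zero,
    rank_quotient_homogenizationIdeal_sup_span_singleton he hy hker hreg isUnit_one hX,
    Nat.cast_one, one_mul]

end Tame

end RankHomogenizationIdeal

section FullJacobian

variable {n d : ℕ} {α : Fin (n + 1) → ℕ} {f : MvPolynomial (Fin (n + 1)) ℂ}

lemma isUnit_mk_of_forall_eval_ne_zero {σ K : Type*} [Finite σ] [Field K] [IsAlgClosed K]
    {J : Ideal (MvPolynomial σ K)} {p : MvPolynomial σ K}
    (hp : ∀ x ∈ zeroLocus K J, eval x p ≠ 0) : IsUnit (Ideal.Quotient.mk J p) := by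
  have hz : zeroLocus K (J ⊔ Ideal.span {p}) = ∅ := by
    refine Set.eq_empty_iff_forall_notMem.mpr fun x hx => ?_
    refine hp x (zeroLocus_anti_mono le_sup_left hx) ?_
    simpa [aeval_eq_eval] using
      hx p (Ideal.mem_sup_right (Ideal.mem_span_singleton_self p))
  have htop : J ⊔ Ideal.span {p} = ⊤ := by
    rw [← Ideal.radical_eq_top, ← vanishingIdeal_zeroLocus_eq_radical (K := K), hz,
      vanishingIdeal_empty]
  rw [← Ideal.span_singleton_eq_top, ← Set.image_singleton, ← Ideal.map_span]
  simpa [Ideal.map_sup, Ideal.map_top] using congrArg (Ideal.map (Ideal.Quotient.mk J)) htop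

lemma reesMap_pderiv_zero_homogenization {B : Type*} [CommRing B] [Algebra ℂ B]
    {y : Fin (n + 1) → B} (hd : 0 < d) (hf : weightedTotalDegree α f ≤ d)
    (hy : ∀ i, aeval y (pderiv i f) = 0) :
    reesMap α y (pderiv 0 (homogenization n d α f)) =
      Polynomial.X ^ (d - 1) * Polynomial.C (d • aeval y f) := by
  have hsucc (i : Fin (n + 1)) :
      reesMap α y (pderiv i.succ (homogenization n d α f)) = 0 := by
    rw [pderiv_succ_homogenization hf, reesMap_homogenization (weightedTotalDegree_pderiv_le hf i),
      hy, map_zero, mul_zero]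
  have heuler := congrArg (reesMap α y)
    (isWeightedHomogeneous_homogenization (α := α) d f).sum_weight_X_mul_pderiv
  simp only [Fin.sum_univ_succ, map_add, map_sum, map_nsmul, map_mul, hsucc, mul_zero, smul_zero,
    Finset.sum_const_zero, add_zero, Fin.cons_zero, one_smul, reesMap_X_zero,
    reesMap_homogenization hf] at heuler
  refine Polynomial.isRegular_X.left (heuler.trans ?_)
  change _ = Polynomial.X * (Polynomial.X ^ (d - 1) * _)
  rw [← mul_assoc, ← pow_succ', Nat.sub_add_cancel hd, map_nsmul, mul_smul_comm]

lemma fullJacobianIdeal_eq_homogenizationIdeal_sup_span (hf : weightedTotalDegree α f ≤ d)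
    (b : ℂ) : fullJacobianIdeal n d α f b =
      homogenizationIdeal α (fun i => d - α i) (fun i => pderiv i f) ⊔
        Ideal.span {pderiv 0 (homogenization n d α (f - C b))} := by
  have hsucc (i : Fin (n + 1)) : pderiv i.succ (homogenization n d α (f - C b)) =
      homogenization n (d - α i) α (pderiv i f) := by
    rw [pderiv_succ_homogenization (weightedTotalDegree_sub_C_le hf b), map_sub, pderiv_C, sub_zero]
  rw [fullJacobianIdeal, ← homogenization_sub_C, Fin.range_fin_succ, Ideal.span_insert, sup_comm,
    homogenizationIdeal]
  simp only [hsucc, Fin.tail_def]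

theorem rank_quotient_fullJacobianIdeal (hd : 0 < d) (hf : weightedTotalDegree α f ≤ d)
    (htame : ∀ x : Fin (n + 1) → ℂ,
      (∀ i, eval x (pderiv i (weightedHomogeneousComponent α d f)) = 0) → x = 0)
    {b : ℂ}
    (hb : b ∉ (fun x => eval x f) '' {x : Fin (n + 1) → ℂ | ∀ i, eval x (pderiv i f) = 0}) :
    Module.rank ℂ (MvPolynomial (Fin (n + 2)) ℂ ⧸ fullJacobianIdeal n d α f b) =
      (d - 1 : ℕ) * Module.rank ℂ (MvPolynomial (Fin (n + 1)) ℂ ⧸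
        Ideal.span (Set.range fun i => pderiv i (weightedHomogeneousComponent α d f))) := by
  set J := Ideal.span (Set.range fun i => pderiv i f)
  set y : Fin (n + 1) → MvPolynomial (Fin (n + 1)) ℂ ⧸ J := fun j => Ideal.Quotient.mk J (X j)
  have hy : aeval y = Ideal.Quotient.mkₐ ℂ J := (aeval_unique (Ideal.Quotient.mkₐ ℂ J)).symm
  have hJ (i : Fin (n + 1)) : pderiv i f ∈ J := Ideal.subset_span ⟨i, rfl⟩
  have hunit : IsUnit (d • aeval y (f - C b)) := by
    have hfb : IsUnit (aeval y (f - C b)) := by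
      rw [hy]
      exact isUnit_mk_of_forall_eval_ne_zero fun x hx hfx => hb
        ⟨x, fun i => by simpa [aeval_eq_eval] using hx _ (hJ i), by simpa [sub_eq_zero] using hfx⟩
    rw [← Nat.cast_smul_eq_nsmul ℂ]
    exact hfb.smul (Units.mk0 (d : ℂ) (Nat.cast_ne_zero.mpr hd.ne'))
  have htop : (fun i => pderiv i (weightedHomogeneousComponent α d f)) =
      fun i => weightedHomogeneousComponent α (d - α i) (pderiv i f) :=
    funext fun i => (weightedHomogeneousComponent_tsub_pderiv hf i).symm
  rw [fullJacobianIdeal_eq_homogenizationIdeal_sup_span hf, htop]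
  refine rank_quotient_homogenizationIdeal_sup_eq_mul_rank_top
    (fun i => weightedTotalDegree_pderiv_le hf i) (fun x hx => htame x fun i => ?_)
    (hy ▸ Ideal.Quotient.mkₐ_surjective ℂ J) (hy ▸ Ideal.Quotient.mkₐ_ker ℂ J) hunit
    (reesMap_pderiv_zero_homogenization hd (weightedTotalDegree_sub_C_le hf b) fun i => ?_)
  · exact congrFun htop i ▸ hx i
  · rw [map_sub, pderiv_C, sub_zero, hy]
    exact Ideal.Quotient.eq_zero_iff_mem.mpr (hJ i)

lemma pos_of_tame (hα : ∀ i, 0 < α i)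
    (htame : ∀ x : Fin (n + 1) → ℂ,
      (∀ i, eval x (pderiv i (weightedHomogeneousComponent α d f)) = 0) → x = 0) : 0 < d := by
  refine Nat.pos_of_ne_zero fun hd => one_ne_zero (htame 1 fun i => ?_)
  rw [pderiv_eq_zero_of_isWeightedHomogeneous
    (weightedHomogeneousComponent_isWeightedHomogeneous d f) (hd ▸ hα i), map_zero]

end FullJacobian

lemma sum_eq_finrank_of_linearIndependent_of_span_eq_top {ι K V : Type*} [DivisionRing K]
    [AddCommGroup V] [Module K V] {I : Finset ι} {c : ι → ℕ}
    {v : {p : ι × ℕ // p.1 ∈ I ∧ p.2 < c p.1} → V} (hv : LinearIndependent K v)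
    (hspan : Submodule.span K (Set.range v) = ⊤) : ∑ i ∈ I, c i = Module.finrank K V := by
  let toSigma : {p : ι × ℕ // p.1 ∈ I ∧ p.2 < c p.1} ≃ I.sigma fun i => Finset.range (c i) :=
    (Equiv.sigmaEquivProd ι ℕ).symm.subtypeEquiv fun p => by simp
  rw [Module.finrank_eq_nat_card_basis (Module.Basis.mk hv hspan.ge), Nat.card_congr toSigma,
    Nat.card_eq_fintype_card, Fintype.card_coe, Finset.card_sigma]
  simp only [Finset.card_range]

theorem dim_full_jacobian_quotient_general
    (n : ℕ) (α : Fin (n + 1) → ℕ) (f : MvPolynomial (Fin (n + 1)) ℂ) (d : ℕ) (hd₀ : 0 < d)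
    (hd : weightedTotalDegree α f = d)
    (htame : ∀ x : Fin (n + 1) → ℂ,
      (∀ i, eval x (pderiv i (weightedHomogeneousComponent α d f)) = 0) → x = 0)
    (b : ℂ)
    (hb : b ∉ (fun x => eval x f) '' {x : Fin (n + 1) → ℂ | ∀ i, eval x (pderiv i f) = 0}) :
    Module.finrank ℂ (MvPolynomial (Fin (n + 2)) ℂ ⧸ fullJacobianIdeal n d α f b) =
      (d - 1) * Module.finrank ℂ (MvPolynomial (Fin (n + 1)) ℂ ⧸
        Ideal.span (Set.range fun i => pderiv i (weightedHomogeneousComponent α d f))) ∧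
    ∀ (I : Finset (Fin (n + 1) →₀ ℕ)) (dβ : (Fin (n + 1) →₀ ℕ) → ℕ),
      (LinearIndependent ℂ
        (fun p : {p : (Fin (n + 1) →₀ ℕ) × ℕ // p.1 ∈ I ∧ p.2 < dβ p.1} =>
          Ideal.Quotient.mk (fullJacobianIdeal n d α f b)
            (X 0 ^ (p : (Fin (n + 1) →₀ ℕ) × ℕ).2 *
              rename Fin.succ (monomial (p : (Fin (n + 1) →₀ ℕ) × ℕ).1 (1 : ℂ)))) ∧
       Submodule.span ℂ
        (Set.range fun p : {p : (Fin (n + 1) →₀ ℕ) × ℕ // p.1 ∈ I ∧ p.2 < dβ p.1} =>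
          Ideal.Quotient.mk (fullJacobianIdeal n d α f b)
            (X 0 ^ (p : (Fin (n + 1) →₀ ℕ) × ℕ).2 *
              rename Fin.succ (monomial (p : (Fin (n + 1) →₀ ℕ) × ℕ).1 (1 : ℂ)))) = ⊤) →
      ∑ β ∈ I, dβ β = (d - 1) * Module.finrank ℂ (MvPolynomial (Fin (n + 1)) ℂ ⧸
        Ideal.span (Set.range fun i => pderiv i (weightedHomogeneousComponent α d f))) := by
  have hdim : Module.finrank ℂ (MvPolynomial (Fin (n + 2)) ℂ ⧸ fullJacobianIdeal n d α f b) =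
      (d - 1) * Module.finrank ℂ (MvPolynomial (Fin (n + 1)) ℂ ⧸
        Ideal.span (Set.range fun i => pderiv i (weightedHomogeneousComponent α d f))) := by
    rw [Module.finrank, rank_quotient_fullJacobianIdeal hd₀ hd.le htame hb, Cardinal.toNat_mul,
      Cardinal.toNat_natCast, Module.finrank]
  exact ⟨hdim, fun I dβ hβ =>
    (sum_eq_finrank_of_linearIndependent_of_span_eq_top hβ.1 hβ.2).trans hdim⟩

/-- Let `f` be strongly tame of weighted degree `d` with homogenization `F`,
`μ = dim_ℂ V_g`, and let `b` be a regular value of `f`.  Then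
`dim_ℂ ℂ[x₀,x]/⟨∂F_b/∂x₀,…,∂F_b/∂x_{n+1}⟩ = (d-1)·μ`, and consequently every function
`β ↦ d_β` for which the monomials `x₀^{β₀}x^β`, `β ∈ I`, `0 ≤ β₀ ≤ d_β - 1`, form a
ℂ-basis of this quotient satisfies `Σ_{β∈I} d_β = (d-1)·μ`. -/
theorem dim_full_jacobian_quotient
    (n : ℕ) (hn : 1 ≤ n) (α : Fin (n + 1) → ℕ)
    (hαpos : ∀ i, 0 < α i) (hα : Finset.univ.gcd α = 1)
    (f : MvPolynomial (Fin (n + 1)) ℂ) (d : ℕ)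
    (hd : MvPolynomial.weightedTotalDegree α f = d)
    (g : MvPolynomial (Fin (n + 1)) ℂ)
    (hg : g = weightedHomogeneousComponent α d f)
    (hg0 : g ≠ 0)
    (htame : ∀ x : Fin (n + 1) → ℂ, (∀ i, eval x (pderiv i g) = 0) → x = 0)
    (μ : ℕ)
    (hμ : μ = Module.finrank ℂ
      (MvPolynomial (Fin (n + 1)) ℂ ⧸ Ideal.span (Set.range fun i => pderiv i g)))
    (I : Finset (Fin (n + 1) →₀ ℕ))
    (hIindep : LinearIndependent ℂ (fun β : I =>
      Ideal.Quotient.mk (Ideal.span (Set.range fun i => pderiv i g))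
        (monomial (β : Fin (n + 1) →₀ ℕ) (1 : ℂ))))
    (hIspan : Submodule.span ℂ (Set.range fun β : I =>
      Ideal.Quotient.mk (Ideal.span (Set.range fun i => pderiv i g))
        (monomial (β : Fin (n + 1) →₀ ℕ) (1 : ℂ))) = ⊤)
    (b : ℂ)
    (hb : b ∉ (fun x => eval x f) '' {x : Fin (n + 1) → ℂ | ∀ i, eval x (pderiv i f) = 0}) :
    Module.finrank ℂ
      (MvPolynomial (Fin (n + 2)) ℂ ⧸ fullJacobianIdeal n d α f b) = (d - 1) * μ ∧
    ∀ dβ : (Fin (n + 1) →₀ ℕ) → ℕ,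
      (LinearIndependent ℂ
        (fun p : {p : (Fin (n + 1) →₀ ℕ) × ℕ // p.1 ∈ I ∧ p.2 < dβ p.1} =>
          Ideal.Quotient.mk (fullJacobianIdeal n d α f b)
            (X 0 ^ (p : (Fin (n + 1) →₀ ℕ) × ℕ).2 *
              rename Fin.succ (monomial (p : (Fin (n + 1) →₀ ℕ) × ℕ).1 (1 : ℂ)))) ∧
       Submodule.span ℂ
        (Set.range fun p : {p : (Fin (n + 1) →₀ ℕ) × ℕ // p.1 ∈ I ∧ p.2 < dβ p.1} =>
          Ideal.Quotient.mk (fullJacobianIdeal n d α f b)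
            (X 0 ^ (p : (Fin (n + 1) →₀ ℕ) × ℕ).2 *
              rename Fin.succ (monomial (p : (Fin (n + 1) →₀ ℕ) × ℕ).1 (1 : ℂ)))) = ⊤) →
      ∑ β ∈ I, dβ β = (d - 1) * μ := by
  subst hg hμ
  obtain ⟨hdim, hsum⟩ := dim_full_jacobian_quotient_general n α f d (pos_of_tame hαpos htame) hd
    htame b hb
  exact ⟨hdim, hsum I⟩
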